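/- Proposition 1 (part 1): Under Assumption A, the optimal control-variate coefficient β* = −(E_g[T²] − α(γ)P(γ)) / var_g[Z] tends to −1 as γ → 0. -/

import Mathlib

open MeasureTheory Matrix Real Filter

noncomputable def mvnPdf {n : ℕ} (m : Fin n → ℝ) (S : Matrix (Fin n) (Fin n) ℝ)
    (y : Fin n → ℝ) : ℝ :=
  Real.exp (-(1/2) * ((y - m) ⬝ᵥ S⁻¹.mulVec (y - m))) / Real.sqrt ((2 * Real.pi) ^ n * S.det)

noncomputable def stdNormCDF (x : ℝ) : ℝ :=
  ∫ t in Set.Iic x, Real.exp (-t ^ 2 / 2) / Real.sqrt (2 * Real.pi)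

/-
Put `τ = m 0 - log γ`, so that `γ → 0+` becomes `τ → ∞`. Around the shifted mean `m + Λ`, with
`Λ = -τ S e₀ / S₀₀`, the likelihood ratio depends on the first coordinate only: it equals
`exp (τ x₀ / S₀₀ - τ² / (2 S₀₀))`. Its moments over a region inside `{x₀ ≤ 0}` are therefore
Laplace integrals concentrated at distance `1 / τ` from the hyperplane `x₀ = 0`. On that scale
Assumption A makes the terms `exp (y j)`, `j ≠ 0`, negligible in the sum, so both regions look like
the whole half-space and `E[T²] ~ E[Z²] ~ c exp (-τ² / S₀₀) / τ`. On the other hand `α` and `P` are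
both `O(exp (-τ² / (2 S₀₀)) / τ)`, so `α P` and `P²` are smaller than `E[Z²]` by a factor `1 / τ`.
-/

open Asymptotics Topology

section Laplace

variable {E : Type*} {k τ : ℝ} {w : ℝ × E → ℝ} {v : E → ℝ} {A : ℝ → Set (ℝ × E)}

/-- The integrand `1_{A τ}(t, y) * exp (k * τ * t) * w (t, y)` after the substitution
`t ↦ t / τ`, which turns the `τ`-dependent exponential weight into the fixed weight
`exp (k * t)`. -/
noncomputable def laplaceRescaling (k : ℝ) (w : ℝ × E → ℝ) (A : ℝ → Set (ℝ × E)) (τ : ℝ) :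
    ℝ × E → ℝ :=
  {p | (p.1 / τ, p.2) ∈ A τ}.indicator fun p => exp (k * p.1) * w (p.1 / τ, p.2)

theorem norm_laplaceRescaling_le (hτ : 0 < τ) (hw : ∀ t y, ‖w (t, y)‖ ≤ v y)
    (hA : ∀ p ∈ A τ, p.1 ≤ 0) (p : ℝ × E) :
    ‖laplaceRescaling k w A τ p‖ ≤ (Set.Iic 0).indicator (fun t => exp (k * t)) p.1 * v p.2 := by
  by_cases hp : (p.1 / τ, p.2) ∈ A τ
  · have hp1 : p.1 ≤ 0 := by simpa using (div_le_iff₀ hτ).1 (hA _ hp)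
    rw [laplaceRescaling, Set.indicator_of_mem (by exact hp), Set.indicator_of_mem (by exact hp1),
      norm_mul, norm_of_nonneg (exp_nonneg _)]
    exact mul_le_mul_of_nonneg_left (hw _ _) (exp_nonneg _)
  · rw [laplaceRescaling, Set.indicator_of_notMem (by exact hp), norm_zero]
    exact mul_nonneg (Set.indicator_nonneg (fun _ _ => exp_nonneg _) _)
      ((norm_nonneg _).trans (hw 0 _))

theorem tendsto_laplaceRescaling {t : ℝ} {y : E} (ht : t ≠ 0)
    (hw : ContinuousAt (fun t => w (t, y)) 0) (hA_nonpos : ∀ τ, ∀ p ∈ A τ, p.1 ≤ 0)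
    (hA_mem : t < 0 → ∀ᶠ τ in atTop, (t / τ, y) ∈ A τ) :
    Tendsto (fun τ => laplaceRescaling k w A τ (t, y)) atTop
      (𝓝 ((Set.Iio 0).indicator (fun t => exp (k * t)) t * w (0, y))) := by
  rcases ht.lt_or_gt with hneg | hpos
  · have hw0 : Tendsto (fun τ => w (t / τ, y)) atTop (𝓝 (w (0, y))) :=
      hw.tendsto.comp (tendsto_const_nhds.div_atTop tendsto_id)
    rw [Set.indicator_of_mem (by exact hneg)]
    refine (hw0.const_mul (exp (k * t))).congr' ?_
    filter_upwards [hA_mem hneg] with τ hτ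
    rw [laplaceRescaling, Set.indicator_of_mem (by exact hτ)]
  · rw [Set.indicator_of_notMem (Set.notMem_Iio.2 hpos.le), zero_mul]
    refine tendsto_const_nhds.congr' ?_
    filter_upwards [eventually_gt_atTop 0] with τ hτ
    rw [laplaceRescaling, Set.indicator_of_notMem]
    exact fun h => (hA_nonpos τ _ h).not_gt (div_pos hpos hτ)

variable [MeasurableSpace E] {ν : Measure E}

theorem smul_integral_prod_eq_integral_div_left {F : Type*} [NormedAddCommGroup F]
    [NormedSpace ℝ F] [SFinite ν] (f : ℝ × E → F) (hτ : 0 < τ) :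
    τ • ∫ p, f p ∂volume.prod ν = ∫ p : ℝ × E, f (p.1 / τ, p.2) ∂volume.prod ν := by
  let e : ℝ × E ≃ᵐ ℝ × E :=
    (Homeomorph.mulLeft₀ τ⁻¹ (inv_ne_zero hτ.ne')).toMeasurableEquiv.prodCongr (.refl E)
  have he : (volume.prod ν).map e = ENNReal.ofReal τ • volume.prod ν := by
    have h : (volume : Measure ℝ).map (τ⁻¹ * ·) = ENNReal.ofReal τ • volume := by
      rw [Real.map_volume_mul_left (inv_ne_zero hτ.ne'), inv_inv, abs_of_pos hτ]
    rw [← Measure.prod_smul_left, ← h]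
    conv_rhs => rw [← Measure.map_id (μ := ν)]
    exact (Measure.map_prod_map _ _ (measurable_const_mul _) measurable_id).symm
  have hmap := e.measurableEmbedding.integral_map (μ := volume.prod ν) f
  rw [he, integral_smul_measure, ENNReal.toReal_ofReal hτ.le] at hmap
  refine hmap.trans (integral_congr_ae (.of_forall fun p => ?_))
  simp only [div_eq_inv_mul]
  rfl

theorem integral_prod_indicator_Iio_exp_mul [SFinite ν] (hk : 0 < k) (u : E → ℝ) :
    ∫ p : ℝ × E, (Set.Iio 0).indicator (fun t => exp (k * t)) p.1 * u p.2 ∂volume.prod ν =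
      k⁻¹ * ∫ y, u y ∂ν := by
  rw [integral_prod_mul, integral_indicator measurableSet_Iio, ← integral_Iic_eq_integral_Iio,
    integral_exp_mul_Iic hk, mul_zero, exp_zero, one_div]

theorem integral_laplaceRescaling [SFinite ν] (hτ : 0 < τ) (hA : MeasurableSet (A τ)) :
    ∫ p, laplaceRescaling k w A τ p ∂volume.prod ν =
      τ * ∫ p in A τ, exp (k * τ * p.1) * w p ∂volume.prod ν := by
  rw [← integral_indicator hA, ← smul_eq_mul, smul_integral_prod_eq_integral_div_left _ hτ]
  refine integral_congr_ae (.of_forall fun p => ?_)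
  simp only [laplaceRescaling, Set.indicator, Set.mem_ofPred_eq,
    show k * τ * (p.1 / τ) = k * p.1 by field_simp]

theorem measurable_laplaceRescaling (hw : Measurable w) (hA : MeasurableSet (A τ)) :
    Measurable (laplaceRescaling k w A τ) := by
  have hscale : Measurable fun p : ℝ × E => (p.1 / τ, p.2) := by fun_prop
  exact Measurable.indicator (by fun_prop) (hscale hA)

theorem tendsto_mul_setIntegral_prod_exp_mul [SFinite ν] (hk : 0 < k) (hwm : Measurable w)
    (hwc : ∀ y, ContinuousAt (fun t => w (t, y)) 0) (hwv : ∀ t y, ‖w (t, y)‖ ≤ v y)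
    (hv : Integrable v ν) (hAm : ∀ τ, MeasurableSet (A τ))
    (hA_nonpos : ∀ τ, ∀ p ∈ A τ, p.1 ≤ 0)
    (hA_mem : ∀ t < 0, ∀ y, ∀ᶠ τ in atTop, (t / τ, y) ∈ A τ) :
    Tendsto (fun τ => τ * ∫ p in A τ, exp (k * τ * p.1) * w p ∂volume.prod ν) atTop
      (𝓝 (k⁻¹ * ∫ y, w (0, y) ∂ν)) := by
  have hbound : Integrable
      (fun p : ℝ × E => (Set.Iic 0).indicator (fun t => exp (k * t)) p.1 * v p.2)
      (volume.prod ν) :=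
    ((integrable_indicator_iff measurableSet_Iic).2 (integrableOn_exp_mul_Iic hk 0)).mul_prod hv
  have hne : ∀ᵐ p ∂(volume : Measure ℝ).prod ν, p.1 ≠ 0 :=
    Measure.quasiMeasurePreserving_fst.ae (Measure.ae_ne volume 0)
  have hlim : Tendsto (fun τ => ∫ p, laplaceRescaling k w A τ p ∂volume.prod ν) atTop
      (𝓝 (k⁻¹ * ∫ y, w (0, y) ∂ν)) := by
    rw [← integral_prod_indicator_Iio_exp_mul hk]
    refine tendsto_integral_filter_of_dominated_convergence _ ?_ ?_ hbound ?_
    · exact .of_forall fun τ => (measurable_laplaceRescaling hwm (hAm τ)).aestronglyMeasurable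
    · filter_upwards [eventually_gt_atTop 0] with τ hτ
      exact .of_forall (norm_laplaceRescaling_le hτ hwv (hA_nonpos τ))
    · filter_upwards [hne] with p hp
      exact tendsto_laplaceRescaling hp (hwc p.2) hA_nonpos fun hneg => hA_mem p.1 hneg p.2
  refine hlim.congr' ?_
  filter_upwards [eventually_gt_atTop 0] with τ hτ using integral_laplaceRescaling hτ (hAm τ)

end Laplace

section GaussianDensity

theorem exists_pos_mul_dotProduct_self_le {ι : Type*} [Fintype ι] [Nonempty ι]
    {M : Matrix ι ι ℝ} (hM : M.PosDef) : ∃ c > 0, ∀ x, c * (x ⬝ᵥ x) ≤ x ⬝ᵥ M *ᵥ x := by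
  classical
  open scoped MatrixOrder in
  obtain ⟨c, hc, hcM⟩ := (CFC.exists_pos_algebraMap_le_iff (A := Matrix ι ι ℝ)
    hM.isHermitian.isSelfAdjoint).2 fun _ h => hM.isStrictlyPositive.spectrum_pos h
  refine ⟨c, hc, fun x => ?_⟩
  have hdiff := (Matrix.le_iff.1 hcM).dotProduct_mulVec_nonneg x
  simpa [sub_mulVec, Algebra.algebraMap_eq_smul_one, smul_mulVec] using hdiff

variable {n : ℕ}

theorem mvnPdf_pos {S : Matrix (Fin n) (Fin n) ℝ} (hS : S.PosDef) (m y : Fin n → ℝ) :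
    0 < mvnPdf m S y := by
  have := hS.det_pos
  unfold mvnPdf
  positivity

theorem continuous_mvnPdf (m : Fin n → ℝ) (S : Matrix (Fin n) (Fin n) ℝ) :
    Continuous (mvnPdf m S) := by
  have hsub : Continuous fun y : Fin n → ℝ => y - m := by fun_prop
  exact (continuous_const.mul (hsub.dotProduct
    (Continuous.matrix_mulVec continuous_const hsub))).rexp.div_const _

theorem mvnPdf_add_right (m x : Fin n → ℝ) (S : Matrix (Fin n) (Fin n) ℝ) :
    mvnPdf m S (m + x) = mvnPdf 0 S x := by
  simp only [mvnPdf, add_sub_cancel_left, sub_zero]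

theorem mvnPdf_add_mulVec_div (m u x : Fin n → ℝ) {S : Matrix (Fin n) (Fin n) ℝ}
    (hS : S.PosDef) :
    mvnPdf m S (m + S *ᵥ u + x) / mvnPdf (m + S *ᵥ u) S (m + S *ᵥ u + x) =
      exp (-(u ⬝ᵥ x) - (u ⬝ᵥ S *ᵥ u) / 2) := by
  have hdet : 0 < S.det := hS.det_pos
  have hinv : S⁻¹ *ᵥ (S *ᵥ u) = u := by
    rw [mulVec_mulVec, nonsing_inv_mul _ hdet.ne'.isUnit, one_mulVec]
  have hsymm : (S *ᵥ u) ⬝ᵥ S⁻¹ *ᵥ x = u ⬝ᵥ x := by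
    have htrans : (S⁻¹)ᵀ = S⁻¹ := by simpa using hS.inv.isHermitian.eq
    rw [dotProduct_mulVec, ← mulVec_transpose, htrans, hinv]
  have hquad : (S *ᵥ u + x) ⬝ᵥ S⁻¹ *ᵥ (S *ᵥ u + x) =
      x ⬝ᵥ S⁻¹ *ᵥ x + 2 * (u ⬝ᵥ x) + u ⬝ᵥ S *ᵥ u := by
    rw [mulVec_add, add_dotProduct, dotProduct_add, dotProduct_add, hsymm, hinv,
      dotProduct_comm x u, dotProduct_comm (S *ᵥ u) u]
    ring
  rw [mvnPdf_add_right, add_assoc, mvnPdf_add_right, mvnPdf, mvnPdf, sub_zero, sub_zero, hquad,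
    div_div_div_cancel_right₀ (by positivity), ← exp_sub]
  ring_nf

theorem exists_mvnPdf_zero_cons_le {S : Matrix (Fin (n + 1)) (Fin (n + 1)) ℝ} (hS : S.PosDef) :
    ∃ v : (Fin n → ℝ) → ℝ, Integrable v ∧
      ∀ (t : ℝ) z, mvnPdf 0 S (Fin.cons t z : Fin (n + 1) → ℝ) ≤ v z := by
  obtain ⟨c, hc, hquad⟩ := exists_pos_mul_dotProduct_self_le hS.inv
  refine ⟨fun z => (√((2 * π) ^ (n + 1) * S.det))⁻¹ * ∏ i, exp (-(c / 2) * z i ^ 2),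
    (Integrable.fintype_prod fun _ => integrable_exp_neg_mul_sq (half_pos hc)).const_mul _,
    fun t z => ?_⟩
  have hsum : c * (t ^ 2 + ∑ i, z i ^ 2) ≤
      (Fin.cons t z : Fin (n + 1) → ℝ) ⬝ᵥ S⁻¹ *ᵥ (Fin.cons t z : Fin (n + 1) → ℝ) := by
    simpa [dotProduct, Fin.sum_univ_succ, ← sq] using hquad (Fin.cons t z)
  beta_reduce
  rw [mvnPdf, sub_zero, div_eq_inv_mul, ← exp_sum, ← Finset.mul_sum]
  refine mul_le_mul_of_nonneg_left (exp_le_exp.2 ?_) (by positivity)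
  nlinarith [mul_nonneg hc.le (sq_nonneg t)]

theorem integral_mvnPdf_zero_cons_zero_pos {S : Matrix (Fin (n + 1)) (Fin (n + 1)) ℝ}
    (hS : S.PosDef) : 0 < ∫ z : Fin n → ℝ, mvnPdf 0 S (Fin.cons 0 z : Fin (n + 1) → ℝ) := by
  obtain ⟨v, hv, hle⟩ := exists_mvnPdf_zero_cons_le hS
  have hcont : Continuous fun z : Fin n → ℝ => mvnPdf 0 S (Fin.cons 0 z : Fin (n + 1) → ℝ) :=
    (continuous_mvnPdf 0 S).comp (by fun_prop)
  refine integral_pos_of_integrable_nonneg_nonzero (x := 0) hcont ?_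
    (fun z => (mvnPdf_pos hS _ _).le) (mvnPdf_pos hS _ _).ne'
  refine hv.mono' hcont.aestronglyMeasurable (.of_forall fun z => ?_)
  rw [norm_of_nonneg (mvnPdf_pos hS _ _).le]
  exact hle 0 z

theorem setIntegral_eq_setIntegral_cons (f : (Fin (n + 1) → ℝ) → ℝ)
    (A : Set (Fin (n + 1) → ℝ)) :
    ∫ x in A, f x =
      ∫ p in {p : ℝ × (Fin n → ℝ) | (Fin.cons p.1 p.2 : Fin (n + 1) → ℝ) ∈ A},
        f (Fin.cons p.1 p.2) ∂volume.prod volume := by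
  let e := (MeasurableEquiv.piFinSuccAbove (fun _ : Fin (n + 1) => ℝ) 0).symm
  have he : MeasurePreserving e :=
    (volume_preserving_piFinSuccAbove (fun _ : Fin (n + 1) => ℝ) 0).symm
  have hcons (p : ℝ × (Fin n → ℝ)) : e p = Fin.cons p.1 p.2 := Fin.insertNth_zero' p.1 p.2
  rw [← he.setIntegral_preimage_emb e.measurableEmbedding f A]
  simp only [hcons, Set.preimage]
  rfl

theorem tendsto_mul_setIntegral_exp_mul_mvnPdf {S : Matrix (Fin (n + 1)) (Fin (n + 1)) ℝ}
    (hS : S.PosDef) {k : ℝ} (hk : 0 < k) {A : ℝ → Set (Fin (n + 1) → ℝ)}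
    (hAm : ∀ τ, MeasurableSet (A τ)) (hA_nonpos : ∀ τ, ∀ x ∈ A τ, x 0 ≤ 0)
    (hA_mem : ∀ t < 0, ∀ z : Fin n → ℝ, ∀ᶠ τ in atTop,
      (Fin.cons (t / τ) z : Fin (n + 1) → ℝ) ∈ A τ) :
    Tendsto (fun τ => τ * ∫ x in A τ, exp (k * τ * x 0) * mvnPdf 0 S x) atTop
      (𝓝 (k⁻¹ * ∫ z : Fin n → ℝ, mvnPdf 0 S (Fin.cons 0 z : Fin (n + 1) → ℝ))) := by
  obtain ⟨v, hv, hle⟩ := exists_mvnPdf_zero_cons_le hS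
  have hcons : Continuous fun p : ℝ × (Fin n → ℝ) => (Fin.cons p.1 p.2 : Fin (n + 1) → ℝ) := by
    fun_prop
  have hcont := (continuous_mvnPdf 0 S).comp hcons
  simp only [setIntegral_eq_setIntegral_cons, Fin.cons_zero]
  refine tendsto_mul_setIntegral_prod_exp_mul hk hcont.measurable (v := v) (fun z => ?_)
    (fun t z => ?_) hv (fun τ => hcons.measurable (hAm τ)) (fun τ p hp => hA_nonpos τ _ hp) hA_mem
  · exact (hcont.comp (by fun_prop : Continuous fun t : ℝ => (t, z))).continuousAt
  · exact (norm_of_nonneg (mvnPdf_pos hS _ _).le).trans_le (hle t z)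

end GaussianDensity

section NormalTail

theorem stdNormCDF_nonneg (x : ℝ) : 0 ≤ stdNormCDF x :=
  integral_nonneg fun _ => by positivity

theorem stdNormCDF_neg_le {a : ℝ} (ha : 0 < a) : stdNormCDF (-a) ≤ exp (-a ^ 2 / 2) / a := by
  have hpi : 1 ≤ √(2 * π) := one_le_sqrt.2 (by linarith [pi_gt_three])
  have hint := (integrableOn_exp_mul_Iic ha (-a)).const_mul (exp (a ^ 2 / 2))
  calc stdNormCDF (-a) ≤ ∫ t in Set.Iic (-a), exp (a ^ 2 / 2) * exp (a * t) := by
        refine integral_mono_of_nonneg (.of_forall fun t => by positivity) hint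
          (.of_forall fun t => (div_le_self (exp_nonneg _) hpi).trans ?_)
        beta_reduce
        rw [← exp_add]
        gcongr
        nlinarith [sq_nonneg (t + a)]
    _ = exp (-a ^ 2 / 2) / a := by
        rw [integral_const_mul, integral_exp_mul_Iic ha, ← mul_div_assoc, ← exp_add]
        ring_nf

/-- The order of decay `exp (-p τ² / (2 s)) / τ` of the integrals of `exp (-p x² / (2 s))` over
`(-∞, -τ]`. -/
noncomputable def tailScale (s : ℝ) (p : ℕ) (τ : ℝ) : ℝ :=
  exp (-(p * τ ^ 2 / (2 * s))) / τ

theorem isBigO_stdNormCDF_neg_div_sqrt {s : ℝ} (hs : 0 < s) :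
    (fun τ => stdNormCDF (-τ / √s)) =O[atTop] tailScale s 1 := by
  refine .of_bound √s ?_
  filter_upwards [eventually_gt_atTop 0] with τ hτ
  have hτs : 0 < τ / √s := by positivity
  have hscale : 0 ≤ tailScale s 1 τ := by unfold tailScale; positivity
  rw [norm_of_nonneg (stdNormCDF_nonneg _), norm_of_nonneg hscale, neg_div]
  refine (stdNormCDF_neg_le hτs).trans_eq ?_
  rw [tailScale, div_pow, sq_sqrt hs.le, Nat.cast_one, one_mul, div_div_eq_mul_div, neg_div,
    div_div, mul_comm s 2, mul_comm √s, div_mul_eq_mul_div]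

theorem tailScale_one_mul_self_isLittleO (s : ℝ) :
    (fun τ => tailScale s 1 τ * tailScale s 1 τ) =o[atTop] tailScale s 2 := by
  have hinv : (fun τ : ℝ => τ⁻¹) =o[atTop] fun _ => (1 : ℝ) :=
    (isLittleO_one_iff ℝ).2 tendsto_inv_atTop_zero
  refine ((isBigO_refl (tailScale s 2) atTop).mul_isLittleO hinv).congr (fun τ => ?_)
    fun τ => mul_one _
  rw [tailScale, tailScale, div_mul_div_comm, ← exp_add, Nat.cast_one, Nat.cast_ofNat,
    ← div_eq_mul_inv, div_div]
  ring_nf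

end NormalTail

section LikelihoodMoment

variable {n : ℕ}

/-- The contribution of the region `B` to the `p`-th moment, under the proposal `𝒩(m + Λ, S)`, of
its likelihood ratio against the target `𝒩(m, S)`. -/
noncomputable def likelihoodMoment (m Λ : Fin n → ℝ) (S : Matrix (Fin n) (Fin n) ℝ) (p : ℕ)
    (B : Set (Fin n → ℝ)) : ℝ :=
  ∫ y in B, (mvnPdf m S y / mvnPdf (m + Λ) S y) ^ p * mvnPdf (m + Λ) S y

theorem likelihoodMoment_eq_integral_indicator (m Λ : Fin n → ℝ) (S : Matrix (Fin n) (Fin n) ℝ)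
    (p : ℕ) {B : Set (Fin n → ℝ)} (hB : MeasurableSet B) :
    likelihoodMoment m Λ S p B =
      ∫ y, B.indicator (fun _ => (1 : ℝ)) y * (mvnPdf m S y / mvnPdf (m + Λ) S y) ^ p *
        mvnPdf (m + Λ) S y := by
  rw [likelihoodMoment, ← integral_indicator hB]
  refine integral_congr_ae (.of_forall fun y => ?_)
  by_cases hy : y ∈ B <;> simp [hy]

theorem likelihoodMoment_mulVec (m u : Fin n → ℝ) {S : Matrix (Fin n) (Fin n) ℝ} (hS : S.PosDef)
    (p : ℕ) (B : Set (Fin n → ℝ)) :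
    likelihoodMoment m (S *ᵥ u) S p B =
      exp (-(p * (u ⬝ᵥ S *ᵥ u) / 2)) *
        ∫ x in {x | m + S *ᵥ u + x ∈ B}, exp (-(p * (u ⬝ᵥ x))) * mvnPdf 0 S x := by
  rw [likelihoodMoment, ← (measurePreserving_add_left volume (m + S *ᵥ u)).setIntegral_preimage_emb
    (measurableEmbedding_addLeft _), ← integral_const_mul]
  refine integral_congr_ae (.of_forall fun x => ?_)
  beta_reduce
  rw [mvnPdf_add_mulVec_div m u x hS, mvnPdf_add_right, ← exp_nat_mul, ← mul_assoc, ← exp_add]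
  ring_nf

/-- The mean shift along the first column of `S` that lowers the first coordinate by `τ`; at
`τ = m 0 - log γ` it is the paper's `Λ*`. -/
noncomputable def leadingShift (S : Matrix (Fin (n + 1)) (Fin (n + 1)) ℝ) (τ : ℝ) :
    Fin (n + 1) → ℝ :=
  S *ᵥ Pi.single 0 (-(τ / S 0 0))

variable (m : Fin (n + 1) → ℝ) {S : Matrix (Fin (n + 1)) (Fin (n + 1)) ℝ}

theorem leadingShift_apply (τ : ℝ) (i : Fin (n + 1)) :
    leadingShift S τ i = -τ * (S i 0 / S 0 0) := by
  rw [leadingShift, mulVec_single, Pi.smul_apply, col_apply, op_smul_eq_mul]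
  ring

theorem leadingShift_apply_zero (hS : S 0 0 ≠ 0) (τ : ℝ) : leadingShift S τ 0 = -τ := by
  rw [leadingShift_apply, div_self hS, mul_one]

theorem likelihoodMoment_leadingShift (hS : S.PosDef) (p : ℕ) (τ : ℝ)
    (B : Set (Fin (n + 1) → ℝ)) :
    likelihoodMoment m (leadingShift S τ) S p B =
      exp (-(p * τ ^ 2 / (2 * S 0 0))) *
        ∫ x in {x | m + leadingShift S τ + x ∈ B}, exp (p / S 0 0 * τ * x 0) * mvnPdf 0 S x := by
  have h00 : S 0 0 ≠ 0 := hS.diag_pos.ne'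
  have hquad : Pi.single 0 (-(τ / S 0 0)) ⬝ᵥ leadingShift S τ = τ ^ 2 / S 0 0 := by
    rw [single_dotProduct, leadingShift_apply_zero h00]
    ring
  have hlin (x : Fin (n + 1) → ℝ) :
      -(p * (Pi.single 0 (-(τ / S 0 0)) ⬝ᵥ x)) = p / S 0 0 * τ * x 0 := by
    rw [single_dotProduct]
    ring
  rw [leadingShift] at hquad ⊢
  simp only [likelihoodMoment_mulVec m _ hS, hquad, hlin]
  ring_nf

/-- The leading-order term, as `τ → ∞`, of the likelihood moments over regions which, recentred at
the shifted mean and seen at scale `1 / τ` in the first coordinate, fill up the half-space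
`x 0 < 0`. -/
noncomputable def leadingMoment (S : Matrix (Fin (n + 1)) (Fin (n + 1)) ℝ) (p : ℕ) (τ : ℝ) : ℝ :=
  (p / S 0 0 : ℝ)⁻¹ * (∫ z : Fin n → ℝ, mvnPdf 0 S (Fin.cons 0 z : Fin (n + 1) → ℝ)) *
    tailScale (S 0 0) p τ

theorem leadingMoment_isTheta_tailScale (hS : S.PosDef) {p : ℕ} (hp : p ≠ 0) :
    leadingMoment S p =Θ[atTop] tailScale (S 0 0) p :=
  (isTheta_const_mul_left (mul_ne_zero
    (inv_ne_zero (div_ne_zero (Nat.cast_ne_zero.2 hp) hS.diag_pos.ne'))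
    (integral_mvnPdf_zero_cons_zero_pos hS).ne')).2 (isTheta_refl _ _)

theorem likelihoodMoment_isEquivalent (hS : S.PosDef) {p : ℕ} (hp : p ≠ 0)
    {B : ℝ → Set (Fin (n + 1) → ℝ)} (hBm : ∀ τ, MeasurableSet (B τ))
    (hB_nonpos : ∀ τ x, m + leadingShift S τ + x ∈ B τ → x 0 ≤ 0)
    (hB_mem : ∀ t < 0, ∀ z : Fin n → ℝ, ∀ᶠ τ in atTop,
      m + leadingShift S τ + Fin.cons (t / τ) z ∈ B τ) :
    (fun τ => likelihoodMoment m (leadingShift S τ) S p (B τ)) ~[atTop]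
      leadingMoment S p := by
  have hk : (0 : ℝ) < p / S 0 0 := div_pos (Nat.cast_pos.2 hp.bot_lt) hS.diag_pos
  have hlim := tendsto_mul_setIntegral_exp_mul_mvnPdf hS hk
    (fun τ => measurable_const_add (m + leadingShift S τ) (hBm τ)) hB_nonpos hB_mem
  have hconst := mul_pos (inv_pos.2 hk) (integral_mvnPdf_zero_cons_zero_pos hS)
  refine (((isEquivalent_const_iff_tendsto hconst.ne').2 hlim).mul
    (IsEquivalent.refl (u := tailScale (S 0 0) p))).congr_left ?_
  filter_upwards [eventually_ne_atTop 0] with τ hτ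
  simp only [Pi.mul_apply, likelihoodMoment_leadingShift m hS, tailScale, Set.preimage]
  field_simp

end LikelihoodMoment

section Regions

theorem tendsto_mul_exp_div_sub_one (t : ℝ) :
    Tendsto (fun τ => τ * (exp (t / τ) - 1)) atTop (𝓝 t) := by
  have hderiv : HasDerivAt (fun h => exp (t * h)) t 0 := by
    simpa using ((hasDerivAt_id (0 : ℝ)).const_mul t).exp
  simpa [Function.comp_def, div_eq_mul_inv] using
    hderiv.tendsto_slope_zero_right.comp tendsto_inv_atTop_nhdsGT_zero

theorem tendsto_mul_exp_sub_mul (c : ℝ) {d : ℝ} (hd : 0 < d) :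
    Tendsto (fun τ => τ * exp (c - d * τ)) atTop (𝓝 0) := by
  have h := (tendsto_rpow_mul_exp_neg_mul_atTop_nhds_zero 1 d hd).const_mul (exp c)
  rw [mul_zero] at h
  refine h.congr fun τ => ?_
  rw [sub_eq_add_neg, exp_add, rpow_one, neg_mul]
  ring

theorem eventually_exp_div_add_sum_exp_le_one {ι : Type*} [Fintype ι] {t : ℝ} (ht : t < 0)
    (c : ι → ℝ) {d : ι → ℝ} (hd : ∀ i, 0 < d i) :
    ∀ᶠ τ in atTop, exp (t / τ) + ∑ i, exp (c i - d i * τ) ≤ 1 := by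
  have hlim : Tendsto
      (fun τ => τ * (exp (t / τ) - 1) + ∑ i, τ * exp (c i - d i * τ)) atTop (𝓝 t) := by
    simpa using (tendsto_mul_exp_div_sub_one t).add
      (tendsto_finsetSum Finset.univ fun i _ => tendsto_mul_exp_sub_mul (c i) (hd i))
  filter_upwards [hlim.eventually_lt_const ht, eventually_gt_atTop 0] with τ hneg hτ
  rw [← Finset.mul_sum, ← mul_add] at hneg
  linarith [neg_of_mul_neg_right hneg hτ.le]

variable {n : ℕ} (m : Fin (n + 1) → ℝ) {S : Matrix (Fin (n + 1)) (Fin (n + 1)) ℝ}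

theorem exp_add_leadingShift_zero_le_iff (hS : S 0 0 ≠ 0) (τ : ℝ) (x : Fin (n + 1) → ℝ) :
    exp ((m + leadingShift S τ + x) 0) ≤ exp (m 0 - τ) ↔ x 0 ≤ 0 := by
  rw [exp_le_exp, Pi.add_apply, Pi.add_apply, leadingShift_apply_zero hS, ← sub_eq_add_neg,
    add_le_iff_nonpos_right]

theorem exp_apply_le_of_sum_exp_le {ι : Type*} [Fintype ι] {y : ι → ℝ} {γ : ℝ}
    (h : ∑ i, exp (y i) ≤ γ) (i : ι) : exp (y i) ≤ γ :=
  (Finset.single_le_sum (f := fun i => exp (y i)) (fun _ _ => exp_nonneg _)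
    (Finset.mem_univ i)).trans h

theorem eventually_sum_exp_add_leadingShift_le (h00 : 0 < S 0 0)
    (hdom : ∀ i : Fin n, S 0 0 < S i.succ 0) {t : ℝ} (ht : t < 0) (z : Fin n → ℝ) :
    ∀ᶠ τ in atTop,
      ∑ i, exp ((m + leadingShift S τ + (Fin.cons (t / τ) z : Fin (n + 1) → ℝ)) i) ≤
        exp (m 0 - τ) := by
  have hd (i : Fin n) : 0 < S i.succ 0 / S 0 0 - 1 := sub_pos.2 ((one_lt_div h00).2 (hdom i))
  filter_upwards [eventually_exp_div_add_sum_exp_le_one ht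
    (fun i => m i.succ - m 0 + z i) hd] with τ hτ
  have hhead : exp ((m + leadingShift S τ + (Fin.cons (t / τ) z : Fin (n + 1) → ℝ)) 0) =
      exp (m 0 - τ) * exp (t / τ) := by
    rw [Pi.add_apply, Pi.add_apply, leadingShift_apply_zero h00.ne', Fin.cons_zero, exp_add,
      sub_eq_add_neg]
  have htail (i : Fin n) :
      exp ((m + leadingShift S τ + (Fin.cons (t / τ) z : Fin (n + 1) → ℝ)) i.succ) =
      exp (m 0 - τ) * exp (m i.succ - m 0 + z i - (S i.succ 0 / S 0 0 - 1) * τ) := by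
    rw [Pi.add_apply, Pi.add_apply, leadingShift_apply, Fin.cons_succ, ← exp_add]
    ring_nf
  rw [Fin.sum_univ_succ, hhead, Finset.sum_congr rfl fun i _ => htail i, ← Finset.mul_sum,
    ← mul_add]
  exact mul_le_of_le_one_right (exp_nonneg _) hτ

theorem likelihoodMoment_exp_zero_le_isEquivalent (hS : S.PosDef) {p : ℕ} (hp : p ≠ 0) :
    (fun τ => likelihoodMoment m (leadingShift S τ) S p {y | exp (y 0) ≤ exp (m 0 - τ)}) ~[atTop]
      leadingMoment S p := by
  have hiff := exp_add_leadingShift_zero_le_iff m (S := S) hS.diag_pos.ne'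
  refine likelihoodMoment_isEquivalent m hS hp
    (fun τ => measurableSet_le (by fun_prop) (by fun_prop)) (fun τ x => (hiff τ x).1)
    fun t ht z => ?_
  filter_upwards [eventually_gt_atTop 0] with τ hτ
  exact (hiff τ _).2 (div_nonpos_of_nonpos_of_nonneg ht.le hτ.le)

theorem likelihoodMoment_sum_exp_le_isEquivalent (hS : S.PosDef)
    (hdom : ∀ i : Fin n, S 0 0 < S i.succ 0) {p : ℕ} (hp : p ≠ 0) :
    (fun τ => likelihoodMoment m (leadingShift S τ) S p {y | ∑ i, exp (y i) ≤ exp (m 0 - τ)})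
      ~[atTop] leadingMoment S p :=
  likelihoodMoment_isEquivalent m hS hp (fun τ => measurableSet_le (by fun_prop) (by fun_prop))
    (fun τ x hx => (exp_add_leadingShift_zero_le_iff m hS.diag_pos.ne' τ x).1
      (exp_apply_le_of_sum_exp_le hx 0))
    fun _ ht z => eventually_sum_exp_add_leadingShift_le m hS.diag_pos hdom ht z

end Regions

section ControlVariate

theorem tendsto_neg_sub_div_sub {ι : Type*} {l : Filter ι} {T Z a b : ι → ℝ}
    (hTZ : T ~[l] Z) (ha : a =o[l] Z) (hb : b =o[l] Z) (hZ : ∀ᶠ x in l, Z x ≠ 0) :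
    Tendsto (fun x => -(T x - a x) / (Z x - b x)) l (𝓝 (-1)) := by
  have hden : (Z - b) ~[l] Z := IsEquivalent.refl.sub_isLittleO hb
  have hden_ne : ∀ᶠ x in l, (Z - b) x ≠ 0 := by
    filter_upwards [hden.symm.isBigO.eq_zero_imp, hZ] with x himp hne using mt himp hne
  have hratio : Tendsto ((T - a) / (Z - b)) l (𝓝 1) :=
    (isEquivalent_iff_tendsto_one hden_ne).1 ((hTZ.sub_isLittleO ha).trans hden.symm)
  simpa only [neg_div, Pi.div_apply, Pi.sub_apply] using hratio.neg

theorem tendsto_nhdsGT_zero_of_tendsto_exp_sub {α : Type*} {F : ℝ → α} {c : ℝ} {l : Filter α}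
    (h : Tendsto (fun τ => F (exp (c - τ))) atTop l) : Tendsto F (𝓝[>] 0) l := by
  have hlog : Tendsto (fun γ => c - log γ) (𝓝[>] 0) atTop :=
    tendsto_atTop_add_const_left _ c (tendsto_neg_atBot_atTop.comp tendsto_log_nhdsGT_zero)
  refine (h.comp hlog).congr' ?_
  filter_upwards [self_mem_nhdsWithin] with γ hγ
  rw [Function.comp_apply, sub_sub_cancel, exp_log hγ]

theorem lt_of_sqrt_lt_div_sqrt_mul_mul_sqrt {a b d : ℝ} (ha : 0 < a) (hd : 0 < d)
    (h : √a < b / √(a * d) * √d) : a < b := by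
  rwa [sqrt_mul ha.le, div_mul_eq_mul_div, mul_div_mul_right _ _ (sqrt_pos.2 hd).ne',
    lt_div_iff₀ (sqrt_pos.2 ha), mul_self_sqrt ha.le] at h

theorem tendsto_controlVariateCoeff {n : ℕ} (m : Fin (n + 1) → ℝ)
    {S : Matrix (Fin (n + 1)) (Fin (n + 1)) ℝ} (hS : S.PosDef)
    (hdom : ∀ i : Fin n, S 0 0 < S i.succ 0) :
    let T := fun p τ =>
      likelihoodMoment m (leadingShift S τ) S p {y | ∑ i, exp (y i) ≤ exp (m 0 - τ)}
    let Z := fun τ => likelihoodMoment m (leadingShift S τ) S 2 {y | exp (y 0) ≤ exp (m 0 - τ)}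
    let P := fun τ => stdNormCDF (-τ / √(S 0 0))
    Tendsto (fun τ => -(T 2 τ - T 1 τ * P τ) / (Z τ - P τ ^ 2)) atTop (𝓝 (-1)) := by
  intro T Z P
  have hT {p : ℕ} (hp : p ≠ 0) : T p ~[atTop] leadingMoment S p :=
    likelihoodMoment_sum_exp_le_isEquivalent m hS hdom hp
  have hZ : Z ~[atTop] leadingMoment S 2 :=
    likelihoodMoment_exp_zero_le_isEquivalent m hS two_ne_zero
  have hscaleZ : tailScale (S 0 0) 2 =O[atTop] Z :=
    (leadingMoment_isTheta_tailScale hS two_ne_zero).isBigO_symm.trans hZ.symm.isBigO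
  have hα : T 1 =O[atTop] tailScale (S 0 0) 1 :=
    (hT one_ne_zero).isBigO.trans (leadingMoment_isTheta_tailScale hS one_ne_zero).isBigO
  have hP : P =O[atTop] tailScale (S 0 0) 1 := isBigO_stdNormCDF_neg_div_sqrt hS.diag_pos
  have hnegligible := (tailScale_one_mul_self_isLittleO (S 0 0)).trans_isBigO hscaleZ
  have hZ_ne : ∀ᶠ τ in atTop, Z τ ≠ 0 := by
    filter_upwards [hscaleZ.eq_zero_imp, eventually_gt_atTop 0] with τ himp hτ
    exact mt himp (div_pos (exp_pos _) hτ).ne'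
  simp only [sq]
  exact tendsto_neg_sub_div_sub ((hT two_ne_zero).trans hZ.symm)
    ((hα.mul hP).trans_isLittleO hnegligible) ((hP.mul hP).trans_isLittleO hnegligible) hZ_ne

end ControlVariate

theorem stmt15 {n : ℕ} (m : Fin (n + 1) → ℝ) (S : Matrix (Fin (n + 1)) (Fin (n + 1)) ℝ)
    (hS : S.PosDef)
    (hA : ∀ j : Fin (n + 1), j ≠ 0 →
      Real.sqrt (S 0 0) < S 0 j / Real.sqrt (S 0 0 * S j j) * Real.sqrt (S j j)) :
    let Λ : ℝ → Fin (n + 1) → ℝ := fun γ k =>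
      if k = 0 then Real.log γ - m 0 else S k 0 / S 0 0 * (Real.log γ - m 0)
    let g : ℝ → (Fin (n + 1) → ℝ) → ℝ := fun γ y => mvnPdf (m + Λ γ) S y
    let L : ℝ → (Fin (n + 1) → ℝ) → ℝ := fun γ y => mvnPdf m S y / g γ y
    let ET2 : ℝ → ℝ := fun γ => ∫ y : Fin (n + 1) → ℝ,
      Set.indicator {y : Fin (n + 1) → ℝ | ∑ i, Real.exp (y i) ≤ γ} (fun _ => (1 : ℝ)) y *
        (L γ y) ^ 2 * g γ y
    let EZ2 : ℝ → ℝ := fun γ => ∫ y : Fin (n + 1) → ℝ,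
      Set.indicator {y : Fin (n + 1) → ℝ | Real.exp (y 0) ≤ γ} (fun _ => (1 : ℝ)) y *
        (L γ y) ^ 2 * g γ y
    let α : ℝ → ℝ := fun γ => ∫ y : Fin (n + 1) → ℝ,
      Set.indicator {y : Fin (n + 1) → ℝ | ∑ i, Real.exp (y i) ≤ γ} (fun _ => (1 : ℝ)) y *
        L γ y * g γ y
    let P : ℝ → ℝ := fun γ => stdNormCDF ((Real.log γ - m 0) / Real.sqrt (S 0 0))
    Filter.Tendsto (fun γ : ℝ => -(ET2 γ - α γ * P γ) / (EZ2 γ - P γ ^ 2))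
      (nhdsWithin 0 (Set.Ioi 0)) (nhds (-1)) := by
  intro Λ g L ET2 EZ2 α P
  have h00 : 0 < S 0 0 := hS.diag_pos
  have hdom (i : Fin n) : S 0 0 < S i.succ 0 := by
    have hsymm : S i.succ 0 = S 0 i.succ := by simpa using hS.isHermitian.apply 0 i.succ
    exact hsymm ▸ lt_of_sqrt_lt_div_sqrt_mul_mul_sqrt h00 hS.diag_pos (hA _ i.succ_ne_zero)
  have hlog (τ : ℝ) : log (exp (m 0 - τ)) - m 0 = -τ := by rw [log_exp]; ring
  have hΛ (τ : ℝ) : Λ (exp (m 0 - τ)) = leadingShift S τ := by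
    ext i
    rcases eq_or_ne i 0 with rfl | hi
    · simp only [Λ, hlog, leadingShift_apply_zero h00.ne', if_true]
    · simp only [Λ, hlog, leadingShift_apply, hi, if_false, mul_comm]
  refine tendsto_nhdsGT_zero_of_tendsto_exp_sub (c := m 0) ?_
  refine (tendsto_controlVariateCoeff m hS hdom).congr fun τ => ?_
  have hsum : MeasurableSet {y : Fin (n + 1) → ℝ | ∑ i, exp (y i) ≤ exp (m 0 - τ)} :=
    measurableSet_le (by fun_prop) (by fun_prop)
  have hhead : MeasurableSet {y : Fin (n + 1) → ℝ | exp (y 0) ≤ exp (m 0 - τ)} :=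
    measurableSet_le (by fun_prop) (by fun_prop)
  simp only [ET2, EZ2, α, P, L, g, hΛ, hlog, likelihoodMoment_eq_integral_indicator _ _ _ _ hsum,
    likelihoodMoment_eq_integral_indicator _ _ _ _ hhead, pow_one]
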